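/- Let c be a Coxeter element of G5 and let k ≥ 2. Two reflection factorizations (t₁,…,t_k) and (t′₁,…,t′_k) of c lie in the same Hurwitz orbit if and only if they have the same multiset of conjugacy classes. -/

import Mathlib

noncomputable section

open Matrix Complex

/-- The `i`-th Hurwitz move on length-`k` tuples of group elements. -/
def IsHurwitzMove {G : Type*} [Group G] {k : ℕ} (t t' : Fin k → G) : Prop :=
  ∃ i : ℕ, ∃ h : i + 1 < k,
    t' ⟨i, Nat.lt_of_succ_lt h⟩ = t ⟨i + 1, h⟩ ∧
    t' ⟨i + 1, h⟩ = (t ⟨i + 1, h⟩)⁻¹ * t ⟨i, Nat.lt_of_succ_lt h⟩ * t ⟨i + 1, h⟩ ∧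
    ∀ j : Fin k, (j : ℕ) ≠ i → (j : ℕ) ≠ i + 1 → t' j = t j

/-- Two tuples lie in the same Hurwitz orbit. -/
def SameHurwitzOrbit {G : Type*} [Group G] {k : ℕ} (t t' : Fin k → G) : Prop :=
  Relation.EqvGen IsHurwitzMove t t'

/-- A group element `r` appears (as an entry) in the Hurwitz orbit of the tuple `t`. -/
def Appears {G : Type*} [Group G] {k : ℕ} (r : G) (t : Fin k → G) : Prop :=
  ∃ s : Fin k → G, SameHurwitzOrbit t s ∧ ∃ j, s j = r

/-- A tuple has two consecutive equal entries. -/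
def HasConsecutiveEqualPair {G : Type*} [Group G] {k : ℕ} (t : Fin k → G) : Prop :=
  ∃ i : ℕ, ∃ h : i + 1 < k, t ⟨i, Nat.lt_of_succ_lt h⟩ = t ⟨i + 1, h⟩

/-- Replace the `p`-th entry of a tuple by two consecutive copies of its square. -/
def doubleAt {G : Type*} [Group G] {m : ℕ} (t : Fin m → G) (p : Fin m) : Fin (m + 1) → G :=
  fun j =>
    if h1 : (j : ℕ) < (p : ℕ) then t ⟨j, h1.trans p.isLt⟩
    else if h2 : (j : ℕ) ≤ (p : ℕ) + 1 then (t p) ^ 2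
    else t ⟨(j : ℕ) - 1, by have := j.isLt; omega⟩

/-- `ω = e^(2πi/3)`. -/
def ω : ℂ := Complex.exp (2 * Real.pi * Complex.I / 3)

def AMat : Matrix (Fin 2) (Fin 2) ℂ := !![1, 0; 0, ω]

def BMat : Matrix (Fin 2) (Fin 2) ℂ :=
  !![(ω - ω ^ 2) / 3, ω ^ 2; (-2 * ω ^ 2) / 3, (-ω - 2 * ω ^ 2) / 3]

/-- The complex reflection group G₄ as the subgroup of GL(2,ℂ) generated by `AMat`, `BMat`. -/
def G4 : Subgroup (GL (Fin 2) ℂ) :=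
  Subgroup.closure {g : GL (Fin 2) ℂ |
    (g : Matrix (Fin 2) (Fin 2) ℂ) = AMat ∨ (g : Matrix (Fin 2) (Fin 2) ℂ) = BMat}

/-- The matrix underlying an element of G₄. -/
def mat (t : G4) : Matrix (Fin 2) (Fin 2) ℂ := ((t : GL (Fin 2) ℂ) : Matrix (Fin 2) (Fin 2) ℂ)

/-- A reflection in G₄: a non-identity element with eigenvalue 1. -/
def IsReflection (t : G4) : Prop := t ≠ 1 ∧ (mat t - 1).det = 0

/-- The conjugacy class R₁ of reflections of determinant ω. -/
def R1 : Set G4 := {t | IsReflection t ∧ (mat t).det = ω}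

/-- The conjugacy class R₂ of reflections of determinant ω². -/
def R2 : Set G4 := {t | IsReflection t ∧ (mat t).det = ω ^ 2}

/-- A Coxeter element of G₄: an element with a primitive 6th root of unity as eigenvalue. -/
def IsCoxeter (c : G4) : Prop :=
  ∃ ζ : ℂ, IsPrimitiveRoot ζ 6 ∧ (mat c - ζ • (1 : Matrix (Fin 2) (Fin 2) ℂ)).det = 0

/-- The relators of G₅: a³, b³, abab(baba)⁻¹. -/
def g5Rels : Set (FreeGroup (Fin 2)) :=
  {FreeGroup.of 0 ^ 3, FreeGroup.of 1 ^ 3,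
    FreeGroup.of 0 * FreeGroup.of 1 * FreeGroup.of 0 * FreeGroup.of 1 *
      (FreeGroup.of 1 * FreeGroup.of 0 * FreeGroup.of 1 * FreeGroup.of 0)⁻¹}

/-- The complex reflection group G₅, by its presentation ⟨a,b | a³ = b³ = 1, abab = baba⟩. -/
abbrev G5 := PresentedGroup g5Rels

def ga : G5 := PresentedGroup.of 0
def gb : G5 := PresentedGroup.of 1

/-- The conjugacy class of `a` in G₅. -/
def S1 : Set G5 := {t | IsConj ga t}
/-- The conjugacy class of `b` in G₅. -/
def S2 : Set G5 := {t | IsConj gb t}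
/-- The conjugacy class of `a²` in G₅. -/
def S3 : Set G5 := {t | IsConj (ga ^ 2) t}
/-- The conjugacy class of `b²` in G₅. -/
def S4 : Set G5 := {t | IsConj (gb ^ 2) t}

/-- A reflection in G₅: a conjugate of a, b, a², or b². -/
def IsReflection5 (t : G5) : Prop := t ∈ S1 ∨ t ∈ S2 ∨ t ∈ S3 ∨ t ∈ S4

/-- A Coxeter element of G₅: an element of order 12. -/
def IsCoxeter5 (c : G5) : Prop := orderOf c = 12

/-!
In G₅ conjugation by a reflection `x` permutes each class of four reflections. The reflections of
each class can be placed at the points of the affine line over `𝔽₄ = 𝔽₂(α)`, compatibly for all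
classes, so that `x` acts as the rotation by `α` or `α⁻¹` around its own point, its axis. A
reflection thus becomes a letter with a label, a sign and an axis, and Hurwitz moves become moves on
words of letters. Two reflections commute exactly when their axes agree, and a product of commuting
reflections has order dividing `3`, so a factorization of a Coxeter element is a word whose letters
do not share one axis.

Two such non-coaxial words with the same classes and the same product in the quotient `SL₂(𝔽₃)` of
G₅ are Hurwitz equivalent, by induction on the length: it suffices to move one common letter to the
front of both words so that the remaining words are still non-coaxial. From length four on, all but
at most one of the four letters in the class of the first letter can be moved to the front, so two
words always share one. In length three, `y` can be moved to the front as soon as `y⁻¹` times the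
product is elliptic in `SL₂(𝔽₃)`, a condition on the product only. Lengths two, three and four are
finite computations; they keep track of the strands by giving the letters distinct labels.
-/

open Quandles

section HurwitzEquivalence

variable {Q Q' C G : Type*} [Rack Q] [Rack Q'] [Group G]

/-- The `i`-th Hurwitz move on words over a rack, with positions counted from `0`; a word with
fewer than `i + 2` letters is left unchanged. -/
def hurwitzMove : ℕ → List Q → List Q
  | 0, x :: y :: w => y :: (y ◃⁻¹ x) :: w
  | i + 1, x :: w => x :: hurwitzMove i w
  | _, w => w

/-- The word obtained by performing the Hurwitz moves listed in `β` from left to right. -/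
def hurwitzMoves (β : List ℕ) (w : List Q) : List Q :=
  β.foldl (fun v i => hurwitzMove i v) w

/-- Hurwitz equivalence of words over a rack: the equivalence relation generated by the Hurwitz
moves. -/
def HurwitzEquiv : List Q → List Q → Prop :=
  Relation.EqvGen fun w w' => ∃ i, w' = hurwitzMove i w

theorem shelfHom_map_invAct (f : Q →◃ Q') (x y : Q) : f (x ◃⁻¹ y) = f x ◃⁻¹ f y := by
  rw [← Rack.left_cancel (f x), Rack.right_inv, ← f.map_act, Rack.right_inv]

theorem conj_invAct_eq (x y : Quandle.Conj G) : x ◃⁻¹ y = x⁻¹ * y * x := rfl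

theorem map_hurwitzMove (f : Q →◃ Q') (i : ℕ) (w : List Q) :
    (hurwitzMove i w).map f = hurwitzMove i (w.map f) := by
  induction i generalizing w with
  | zero => rcases w with _ | ⟨x, _ | ⟨y, w⟩⟩ <;> simp [hurwitzMove, shelfHom_map_invAct]
  | succ i ih => rcases w with _ | ⟨x, w⟩ <;> simp [hurwitzMove, ih]

theorem perm_map_hurwitzMove {c : Q → C} (hc : ∀ x y, c (x ◃⁻¹ y) = c y) (i : ℕ) (w : List Q) :
    ((hurwitzMove i w).map c).Perm (w.map c) := by
  fun_induction hurwitzMove i w with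
  | case1 x y w => simpa [hc] using List.Perm.swap _ _ _
  | case2 i x w ih => simpa using ih
  | case3 => rfl

theorem prod_hurwitzMove (i : ℕ) (w : List G) : (hurwitzMove i w).prod = w.prod := by
  fun_induction hurwitzMove i w with
  | case1 x y w => simp [conj_invAct_eq, mul_assoc]
  | case2 i x w ih => simp [ih]
  | case3 => rfl

namespace HurwitzEquiv

variable {u v w : List Q}

theorem refl (w : List Q) : HurwitzEquiv w w := Relation.EqvGen.refl w

theorem symm (h : HurwitzEquiv v w) : HurwitzEquiv w v := Relation.EqvGen.symm _ _ h

theorem trans (h : HurwitzEquiv u v) (h' : HurwitzEquiv v w) : HurwitzEquiv u w :=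
  Relation.EqvGen.trans _ _ _ h h'

theorem of_move (i : ℕ) (w : List Q) : HurwitzEquiv w (hurwitzMove i w) :=
  Relation.EqvGen.rel _ _ ⟨i, rfl⟩

theorem of_moves (β : List ℕ) (w : List Q) : HurwitzEquiv w (hurwitzMoves β w) := by
  induction β generalizing w with
  | nil => exact refl w
  | cons i β ih => exact (of_move i w).trans (ih _)

theorem swap (x y : Q) (w : List Q) : HurwitzEquiv (x :: y :: w) (y :: (y ◃⁻¹ x) :: w) :=
  of_move 0 _

theorem eq_of_invariant {f : List Q → C} (hf : ∀ i w, f (hurwitzMove i w) = f w)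
    (h : HurwitzEquiv v w) : f v = f w := by
  induction h with
  | rel v w h =>
    obtain ⟨i, rfl⟩ := h
    exact (hf i v).symm
  | refl v => rfl
  | symm _ _ _ ih => exact ih.symm
  | trans _ _ _ _ _ ih ih' => exact ih.trans ih'

theorem cons (x : Q) (h : HurwitzEquiv v w) : HurwitzEquiv (x :: v) (x :: w) := by
  induction h with
  | rel v w h =>
    obtain ⟨i, rfl⟩ := h
    exact of_move (i + 1) (x :: v)
  | refl v => exact refl _
  | symm _ _ _ ih => exact ih.symm
  | trans _ _ _ _ _ ih ih' => exact ih.trans ih'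

theorem map (f : Q →◃ Q') (h : HurwitzEquiv v w) : HurwitzEquiv (v.map f) (w.map f) := by
  induction h with
  | rel v w h =>
    obtain ⟨i, rfl⟩ := h
    exact map_hurwitzMove f i v ▸ of_move i (v.map f)
  | refl v => exact refl _
  | symm _ _ _ ih => exact ih.symm
  | trans _ _ _ _ _ ih ih' => exact ih.trans ih'

theorem perm_map {c : Q → C} (hc : ∀ x y, c (x ◃⁻¹ y) = c y) (h : HurwitzEquiv v w) :
    (v.map c).Perm (w.map c) := by
  have := h.eq_of_invariant (f := fun w => (w.map c : Multiset C))
    fun i w => Multiset.coe_eq_coe.2 (perm_map_hurwitzMove hc i w)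
  exact Multiset.coe_eq_coe.1 this

theorem length_eq (h : HurwitzEquiv v w) : v.length = w.length := by
  simpa using (h.perm_map (c := fun _ => ()) fun _ _ => rfl).length_eq

theorem prod_eq {v w : List G} (h : HurwitzEquiv v w) : v.prod = w.prod :=
  h.eq_of_invariant prod_hurwitzMove

theorem exists_front {x : Q} (hx : x ∈ w) : ∃ v, HurwitzEquiv w (x :: v) := by
  induction w with
  | nil => simp at hx
  | cons y w ih =>
    rcases List.mem_cons.1 hx with rfl | hx
    · exact ⟨w, refl _⟩
    · obtain ⟨v, hv⟩ := ih hx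
      exact ⟨_, (hv.cons y).trans (swap y x v)⟩

end HurwitzEquiv

theorem getElem?_hurwitzMove (i j : ℕ) (w : List Q) (h : i + 1 < w.length) :
    (hurwitzMove i w)[j]? =
      if j = i then w[i + 1]? else if j = i + 1 then some (w[i + 1] ◃⁻¹ w[i]) else w[j]? := by
  induction i generalizing j w with
  | zero =>
    obtain ⟨x, y, w, rfl⟩ : ∃ x y v, w = x :: y :: v := by
      rcases w with _ | ⟨x, _ | ⟨y, w⟩⟩ <;> simp_all
    rcases j with _ | _ | j <;> simp [hurwitzMove]
  | succ i ih =>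
    rcases w with _ | ⟨x, w⟩
    · simp at h
    · rcases j with _ | j
      · simp [hurwitzMove]
      · simpa [hurwitzMove] using ih j w (by simpa using h)

theorem hurwitzMove_eq_self {i : ℕ} {w : List Q} (h : w.length ≤ i + 1) :
    hurwitzMove i w = w := by
  fun_induction hurwitzMove i w <;> simp_all

end HurwitzEquivalence

section HurwitzOrbitsOfTuples

variable {G : Type*} [Group G] {k : ℕ} {t t' : Fin k → G}

theorem isHurwitzMove_of_ofFn_eq {i : ℕ} (hi : i + 1 < k)
    (h : List.ofFn t' = hurwitzMove i (List.ofFn t)) : IsHurwitzMove t t' := by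
  have entry (j : Fin k) : t' j =
      if (j : ℕ) = i then t ⟨i + 1, hi⟩
      else if (j : ℕ) = i + 1 then
        (t ⟨i + 1, hi⟩)⁻¹ * t ⟨i, Nat.lt_of_succ_lt hi⟩ * t ⟨i + 1, hi⟩
      else t j := by
    have hj : (List.ofFn t')[(j : ℕ)]? = some (t' j) := by simp
    rw [h, getElem?_hurwitzMove i j _ (by simpa using hi)] at hj
    split_ifs at hj ⊢ <;> simpa [hi, conj_invAct_eq, eq_comm] using hj
  exact ⟨i, hi, by simp [entry], by simp [entry], fun j hj hj' => by simp [entry, hj, hj']⟩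

theorem sameHurwitzOrbit_of_hurwitzEquiv (h : HurwitzEquiv (List.ofFn t) (List.ofFn t')) :
    SameHurwitzOrbit t t' := by
  generalize hw : List.ofFn t = w, hw' : List.ofFn t' = w' at h
  induction h generalizing t t' with
  | rel w w' h =>
    obtain ⟨i, rfl⟩ := h
    subst hw
    rcases lt_or_ge (i + 1) k with hi | hi
    · exact .rel _ _ (isHurwitzMove_of_ofFn_eq hi hw')
    · rw [hurwitzMove_eq_self (by simpa using hi)] at hw'
      exact List.ofFn_injective hw' ▸ .refl _
  | refl w => exact List.ofFn_injective (hw.trans hw'.symm) ▸ .refl _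
  | symm _ _ _ ih => exact .symm _ _ (ih hw' hw)
  | trans w v w' h _ ih ih' =>
    obtain ⟨s, rfl⟩ : ∃ s : Fin k → G, List.ofFn s = v := by
      have hk : k = v.length := by simpa [← hw] using HurwitzEquiv.length_eq h
      subst hk
      exact ⟨v.get, List.ofFn_get v⟩
    exact .trans _ _ _ (ih hw rfl) (ih' rfl hw')

theorem exists_perm_isConj_of_sameHurwitzOrbit (h : SameHurwitzOrbit t t') :
    ∃ σ : Equiv.Perm (Fin k), ∀ i, IsConj (t i) (t' (σ i)) := by
  induction h with
  | rel t t' h =>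
    obtain ⟨i, hi, h_left, h_right, h_other⟩ := h
    set l : Fin k := ⟨i, Nat.lt_of_succ_lt hi⟩
    set r : Fin k := ⟨i + 1, hi⟩
    refine ⟨Equiv.swap l r, fun j => ?_⟩
    rcases eq_or_ne j l with rfl | hjl
    · rw [Equiv.swap_apply_left, h_right]
      exact isConj_iff.2 ⟨(t r)⁻¹, by rw [inv_inv]⟩
    rcases eq_or_ne j r with rfl | hjr
    · rw [Equiv.swap_apply_right, h_left]
    · rw [Equiv.swap_apply_of_ne_of_ne hjl hjr,
        h_other j (Fin.val_ne_of_ne hjl) (Fin.val_ne_of_ne hjr)]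
  | refl t => exact ⟨1, fun i => IsConj.refl _⟩
  | symm t t' _ ih =>
    obtain ⟨σ, hσ⟩ := ih
    exact ⟨σ.symm, fun i => by simpa using (hσ (σ.symm i)).symm⟩
  | trans t t' t'' _ _ ih ih' =>
    obtain ⟨σ, hσ⟩ := ih
    obtain ⟨τ, hτ⟩ := ih'
    exact ⟨τ * σ, fun i => (hσ i).trans (hτ (σ i))⟩

end HurwitzOrbitsOfTuples

/-- The set of axes, in bijection with the field `𝔽₄ = 𝔽₂(α)`; the pair `(u, v)` stands for
`u + v α`, where `α ^ 2 = α + 1`. -/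
abbrev Axis : Type := ZMod 2 × ZMod 2

/-- Multiplication by `α` for the sign `true`, by `α⁻¹` for the sign `false`. -/
def turn : Bool → Axis → Axis
  | true, (u, v) => (v, u + v)
  | false, (u, v) => (u + v, u)

/-- A reflection symbol. Its conjugacy class is recorded by `label` and `sign`, its position in the
class by `axis`. Conjugation by a letter rotates the axes around its own axis and does not see the
label. -/
@[ext]
structure Letter (Λ : Type*) where
  label : Λ
  sign : Bool
  axis : Axis
  deriving DecidableEq

variable {Λ Λ' : Type*}

instance : Rack (Letter Λ) where
  act x y := { y with axis := x.axis + turn (!x.sign) (y.axis - x.axis) }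
  invAct x y := { y with axis := x.axis + turn x.sign (y.axis - x.axis) }
  self_distrib {x y z} := by
    have distrib : ∀ (s s' : Bool) (p q r : Axis),
        p + turn s (q + turn s' (r - q) - p) =
          (p + turn s (q - p)) + turn s' (p + turn s (r - p) - (p + turn s (q - p))) := by
      decide +kernel
    ext1
    exacts [rfl, rfl, distrib _ _ _ _ _]
  left_inv x y := by
    have cancel : ∀ (s : Bool) (p q : Axis), p + turn s (p + turn (!s) (q - p) - p) = q := by
      decide +kernel
    ext1
    exacts [rfl, rfl, cancel _ _ _]
  right_inv x y := by
    have cancel : ∀ (s : Bool) (p q : Axis), p + turn (!s) (p + turn s (q - p) - p) = q := by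
      decide +kernel
    ext1
    exacts [rfl, rfl, cancel _ _ _]

namespace Letter

/-- The conjugacy class of a letter. -/
def cls (x : Letter Λ) : Λ × Bool := (x.label, x.sign)

/-- The letter of the same class with axis `p`. -/
def withAxis (x : Letter Λ) (p : Axis) : Letter Λ := { x with axis := p }

/-- Relabelling the letters by `f` and translating their axes by `a`. -/
def map (f : Λ → Λ') (a : Axis) : Letter Λ →◃ Letter Λ' where
  toFun x := ⟨f x.label, x.sign, x.axis + a⟩
  map_act' {x y} := by
    ext1
    · rfl
    · rfl
    · change x.axis + turn (!x.sign) (y.axis - x.axis) + a =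
        x.axis + a + turn (!x.sign) (y.axis + a - (x.axis + a))
      rw [add_sub_add_right_eq_sub, add_right_comm]

theorem map_apply (f : Λ → Λ') (a : Axis) (x : Letter Λ) :
    map f a x = ⟨f x.label, x.sign, x.axis + a⟩ := rfl

theorem cls_invAct (x y : Letter Λ) : (x ◃⁻¹ y).cls = y.cls := rfl

theorem eq_withAxis_of_cls_eq {x y : Letter Λ} (h : x.cls = y.cls) : x = y.withAxis x.axis := by
  simp only [cls, Prod.mk.injEq] at h
  ext1
  exacts [h.1, h.2, rfl]

theorem axis_invAct_eq_iff (x y : Letter Λ) : (x ◃⁻¹ y).axis = x.axis ↔ y.axis = x.axis := by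
  have fixed_iff : ∀ (s : Bool) (p q : Axis), p + turn s (q - p) = p ↔ q = p := by decide +kernel
  exact fixed_iff _ _ _

theorem axis_invAct_eq_self_iff (x y : Letter Λ) : (x ◃⁻¹ y).axis = y.axis ↔ y.axis = x.axis := by
  have fixed_iff : ∀ (s : Bool) (p q : Axis), p + turn s (q - p) = q ↔ q = p := by decide +kernel
  exact fixed_iff _ _ _

/-- Conjugating a fixed letter by the letters of a class is injective on axes, hence onto. -/
theorem exists_withAxis_invAct_eq (x y : Letter Λ) (p : Axis) :
    ∃ q, y.withAxis q ◃⁻¹ x = x.withAxis p := by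
  have surj : ∀ (s : Bool) (p q : Axis), ∃ r, r + turn s (q - r) = p := by decide +kernel
  obtain ⟨q, hq⟩ := surj y.sign p x.axis
  exact ⟨q, by ext1; exacts [rfl, rfl, hq]⟩

end Letter

/-- The letters of the word share one axis. -/
def Coaxial (w : List (Letter Λ)) : Prop :=
  w.Pairwise fun x y => x.axis = y.axis

instance : DecidablePred (Coaxial (Λ := Λ)) :=
  fun _ => inferInstanceAs (Decidable (List.Pairwise _ _))

theorem coaxial_cons_cons_iff {x y : Letter Λ} {w : List (Letter Λ)} :
    Coaxial (x :: y :: w) ↔ x.axis = y.axis ∧ Coaxial (y :: w) := by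
  simp only [Coaxial, List.pairwise_cons, List.mem_cons]
  grind

theorem coaxial_iff_exists {w : List (Letter Λ)} : Coaxial w ↔ ∃ p, ∀ x ∈ w, x.axis = p := by
  cases w with
  | nil => simp [Coaxial]
  | cons x w =>
    refine ⟨fun h => ⟨x.axis, ?_⟩, ?_⟩
    · simp only [Coaxial, List.pairwise_cons] at h
      simp only [List.mem_cons]
      grind
    · rintro ⟨p, hp⟩
      exact List.pairwise_of_forall_mem_list fun y hy z hz => (hp y hy).trans (hp z hz).symm

theorem forall_axis_eq_hurwitzMove_iff (p : Axis) (i : ℕ) (w : List (Letter Λ)) :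
    (∀ x ∈ hurwitzMove i w, x.axis = p) ↔ ∀ x ∈ w, x.axis = p := by
  fun_induction hurwitzMove i w with
  | case1 x y w =>
    simp only [List.forall_mem_cons]
    have := Letter.axis_invAct_eq_iff y x
    grind
  | case2 i x w ih => simp only [List.forall_mem_cons, ih]
  | case3 => rfl

theorem HurwitzEquiv.coaxial_iff {v w : List (Letter Λ)} (h : HurwitzEquiv v w) :
    Coaxial v ↔ Coaxial w := by
  have all_iff (p : Axis) : (∀ x ∈ v, x.axis = p) ↔ ∀ x ∈ w, x.axis = p :=
    (h.eq_of_invariant (f := fun w => ∀ x ∈ w, x.axis = p)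
      fun i w => propext (forall_axis_eq_hurwitzMove_iff p i w)).to_iff
  simp only [coaxial_iff_exists, all_iff]

theorem coaxial_map_iff (f : Λ → Λ') (a : Axis) {w : List (Letter Λ)} :
    Coaxial (w.map (Letter.map f a)) ↔ Coaxial w := by
  simp [Coaxial, List.pairwise_map, Letter.map_apply]

/-- Some word Hurwitz equivalent to `w` starts with the letter `y` and remains non-coaxial once
this letter is removed. -/
def Fronts (w : List (Letter Λ)) (y : Letter Λ) : Prop :=
  ∃ v, HurwitzEquiv w (y :: v) ∧ ¬Coaxial v

/-- The Hurwitz moves listed in `β` witness `Fronts w y`. -/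
def FrontsBy (β : List ℕ) (w : List (Letter Λ)) (y : Letter Λ) : Prop :=
  (hurwitzMoves β w).head? = some y ∧ ¬Coaxial (hurwitzMoves β w).tail

instance [DecidableEq Λ] (β : List ℕ) (w : List (Letter Λ)) (y : Letter Λ) :
    Decidable (FrontsBy β w y) :=
  inferInstanceAs (Decidable (_ ∧ _))

theorem FrontsBy.fronts {β : List ℕ} {w : List (Letter Λ)} {y : Letter Λ} (h : FrontsBy β w y) :
    Fronts w y :=
  ⟨_, List.eq_cons_of_mem_head? h.1 ▸ HurwitzEquiv.of_moves β w, h.2⟩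

theorem HurwitzEquiv.fronts {v w : List (Letter Λ)} {y : Letter Λ} (h : HurwitzEquiv v w)
    (hw : Fronts w y) : Fronts v y :=
  let ⟨u, hu, hu'⟩ := hw
  ⟨u, h.trans hu, hu'⟩

theorem Fronts.map {w : List (Letter Λ)} {y : Letter Λ} (h : Fronts w y) (f : Λ → Λ') (a : Axis) :
    Fronts (w.map (Letter.map f a)) (Letter.map f a y) :=
  let ⟨v, hv, hv'⟩ := h
  ⟨v.map (Letter.map f a), hv.map (Letter.map f a), mt (coaxial_map_iff f a).1 hv'⟩

section AxisElement

variable {G H : Type*} [Group G] [Group H]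

/-- The four conjugates of `s` and `t`, indexed by their axes, when `s` and `t` are elements of
order `3` satisfying the braid relation. -/
def axisElement (s t : G) : Axis → G
  | (0, 0) => s
  | (1, 0) => t
  | (0, 1) => t * s * t⁻¹
  | (1, 1) => s * t * s⁻¹

variable {s t : G}

theorem map_axisElement (f : G →* H) (s t : G) :
    ∀ p, f (axisElement s t p) = axisElement (f s) (f t) p
  | (0, 0) | (1, 0) => rfl
  | (0, 1) | (1, 1) => by simp [axisElement]

theorem axisElement_swap (s t : G) : ∀ p, axisElement t s p = axisElement s t ((1, 0) + p)
  | (0, 0) | (1, 0) | (0, 1) | (1, 1) => rfl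

theorem pow_three_eq_one_of_braid (hbraid : s * t * s = t * s * t) (hs : s ^ 3 = 1) :
    t ^ 3 = 1 := by
  have ht : t = s * t * s * (s * t)⁻¹ := by rw [hbraid]; group
  rw [ht, conj_pow, hs]
  group

theorem conj_eq_of_braid (hbraid : s * t * s = t * s * t) : t * s * t⁻¹ = s⁻¹ * t * s := by
  rw [mul_inv_eq_iff_eq_mul, mul_assoc, mul_assoc, eq_inv_mul_iff_mul_eq, ← mul_assoc, hbraid,
    mul_assoc]

theorem semiconjBy_axisElement_zero (hbraid : s * t * s = t * s * t) (hs : s ^ 3 = 1) :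
    ∀ q, SemiconjBy s (axisElement s t (turn true q)) (axisElement s t q)
  | (0, 0) => Commute.refl s
  | (1, 0) => by
    change s * (t * s * t⁻¹) = t * s
    rw [conj_eq_of_braid hbraid]
    group
  | (0, 1) => by
    change s * (s * t * s⁻¹) = t * s * t⁻¹ * s
    have hs' : s * s = s⁻¹ := by rw [eq_inv_iff_mul_eq_one, ← pow_three', hs]
    rw [conj_eq_of_braid hbraid, mul_assoc _ s s, hs', ← hs']
    group
  | (1, 1) => by
    change s * t = s * t * s⁻¹ * s
    group

theorem semiconjBy_axisElement_one (hbraid : s * t * s = t * s * t) (hs : s ^ 3 = 1) (q : Axis) :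
    SemiconjBy t (axisElement s t ((1, 0) + turn true (q - (1, 0)))) (axisElement s t q) := by
  have h := semiconjBy_axisElement_zero hbraid.symm (pow_three_eq_one_of_braid hbraid hs)
    (q - (1, 0))
  rwa [axisElement_swap s t, axisElement_swap s t, add_sub_cancel] at h

theorem semiconjBy_axisElement (hbraid : s * t * s = t * s * t) (hs : s ^ 3 = 1) (p q : Axis) :
    SemiconjBy (axisElement s t p) (axisElement s t (p + turn true (q - p)))
      (axisElement s t q) := by
  have around_s := semiconjBy_axisElement_zero hbraid hs
  have around_t := semiconjBy_axisElement_one hbraid hs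
  match p with
  | (0, 0) =>
    rw [Prod.mk_zero_zero, zero_add, sub_zero]
    exact around_s q
  | (1, 0) => exact around_t q
  | (0, 1) =>
    have rotations : ∀ q : Axis, turn true ((1, 0) + turn true (q - (1, 0))) =
        (1, 0) + turn true ((0, 1) + turn true (q - (0, 1)) - (1, 0)) := by decide
    have h := around_s ((1, 0) + turn true (q - (1, 0)))
    rw [rotations] at h
    exact ((around_t q).mul_left h).mul_left (around_t _).inv_symm_left
  | (1, 1) =>
    have rotations : ∀ q : Axis, (1, 0) + turn true (turn true q - (1, 0)) =
        turn true ((1, 1) + turn true (q - (1, 1))) := by decide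
    have h := around_t (turn true q)
    rw [rotations] at h
    exact ((around_s q).mul_left h).mul_left (around_s _).inv_symm_left

/-- The group element denoted by a letter: the conjugate of `s` and `t` with the given axis, times
the central element `z` of the given label, or the inverse of this product, depending on the
sign. -/
def letterElement (s t : G) (z : Λ → G) (x : Letter Λ) : G :=
  bif x.sign then axisElement s t x.axis * z x.label else (axisElement s t x.axis * z x.label)⁻¹

theorem map_letterElement (f : G →* H) (s t : G) (z : Λ → G) (x : Letter Λ) :
    f (letterElement s t z x) = letterElement (f s) (f t) (f ∘ z) x := by
  unfold letterElement
  cases x.sign <;> simp [map_axisElement]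

theorem semiconjBy_letterElement_axisElement (hbraid : s * t * s = t * s * t) (hs : s ^ 3 = 1)
    {z : Λ → G} (hz : ∀ l, z l ∈ Subgroup.center G) (x : Letter Λ) (q : Axis) :
    SemiconjBy (letterElement s t z x) (axisElement s t q)
      (axisElement s t (x.axis + turn (!x.sign) (q - x.axis))) := by
  have z_commute (p : Axis) : Commute (z x.label) (axisElement s t p) :=
    (Subgroup.mem_center_iff.1 (hz x.label) _).symm
  have turn_turn : ∀ q : Axis, turn true (turn false q) = q := by decide
  unfold letterElement
  cases x.sign
  · exact ((semiconjBy_axisElement hbraid hs x.axis q).mul_left (z_commute _)).inv_symm_left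
  · have h := semiconjBy_axisElement hbraid hs x.axis (x.axis + turn false (q - x.axis))
    rw [add_sub_cancel_left, turn_turn, add_sub_cancel] at h
    exact h.mul_left (z_commute _)

theorem semiconjBy_letterElement (hbraid : s * t * s = t * s * t) (hs : s ^ 3 = 1) {z : Λ → G}
    (hz : ∀ l, z l ∈ Subgroup.center G) (x y : Letter Λ) :
    SemiconjBy (letterElement s t z x) (letterElement s t z y) (letterElement s t z (x ◃ y)) := by
  have h := (semiconjBy_letterElement_axisElement hbraid hs hz x y.axis).mul_right
    (Subgroup.mem_center_iff.1 (hz y.label) (letterElement s t z x))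
  rcases y with ⟨l, _ | _, q⟩
  exacts [h.inv_right, h]

/-- The homomorphism `letterElement` from the rack of letters to the conjugation quandle. -/
def letterHom (hbraid : s * t * s = t * s * t) (hs : s ^ 3 = 1) {z : Λ → G}
    (hz : ∀ l, z l ∈ Subgroup.center G) : Letter Λ →◃ Quandle.Conj G where
  toFun := letterElement s t z
  map_act' {x y} := eq_mul_inv_of_mul_eq (semiconjBy_letterElement hbraid hs hz x y).eq.symm

theorem commute_of_axis_eq (f : Letter Λ →◃ Quandle.Conj G) {x y : Letter Λ}
    (h : x.axis = y.axis) : Commute (f x) (f y) := by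
  have fixed : x ◃⁻¹ y = y := Letter.ext rfl rfl (((x.axis_invAct_eq_iff y).2 h.symm).trans h)
  have h := shelfHom_map_invAct f x y
  rw [fixed, conj_invAct_eq, mul_assoc, eq_inv_mul_iff_mul_eq] at h
  exact h

end AxisElement

section FiniteComputations

/-- The plane over `𝔽₃`. -/
abbrev Plane : Type := ZMod 3 × ZMod 3

/-- The transvection `(u, v) ↦ (u + v, v)`. -/
def shear : Equiv.Perm Plane where
  toFun v := (v.1 + v.2, v.2)
  invFun v := (v.1 - v.2, v.2)
  left_inv v := by simp
  right_inv v := by simp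

/-- The transvection `(u, v) ↦ (u, v - u)`. -/
def shear' : Equiv.Perm Plane where
  toFun v := (v.1, v.2 - v.1)
  invFun v := (v.1, v.2 + v.1)
  left_inv v := by simp
  right_inv v := by simp

/-- The transvection denoted by a letter in `SL₂(𝔽₃)`, realised as a permutation of the plane; it
ignores the label. -/
def spin : Letter Λ →◃ Quandle.Conj (Equiv.Perm Plane) :=
  letterHom (s := shear) (t := shear') (z := 1) (by decide) (by decide) fun _ => one_mem _

/-- For `g` in `SL₂(𝔽₃)` this says that the order of `g` is `4` or `6`. -/
def IsElliptic (g : Equiv.Perm Plane) : Prop :=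
  (∀ v ≠ 0, g v ≠ v) ∧ ∃ v, g v ≠ -v

instance : DecidablePred IsElliptic := fun _ => inferInstanceAs (Decidable (_ ∧ _))

/-- The word whose `i`-th letter has label `i`, sign `ε i` and axis `p i`; distinct labels keep
track of the strands of a braid. -/
def strands {n : ℕ} (ε : Fin n → Bool) (p : Fin n → Axis) : List (Letter (Fin n)) :=
  List.ofFn fun i => ⟨i, ε i, p i⟩

set_option maxRecDepth 100000 in
theorem exists_hurwitzMoves_strands_pair_eq : ∀ (ε₀ ε₁ : Bool) (p₀ p₁ q₀ q₁ : Axis),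
    ¬Coaxial (strands ![ε₀, ε₁] ![p₀, p₁]) → ¬Coaxial (strands ![ε₀, ε₁] ![q₀, q₁]) →
    ((strands ![ε₀, ε₁] ![p₀, p₁]).map spin).prod =
      ((strands ![ε₀, ε₁] ![q₀, q₁]).map spin).prod →
    ∃ β ∈ [[], [0, 0], [0, 0, 0, 0]],
      hurwitzMoves β (strands ![ε₀, ε₁] ![p₀, p₁]) = strands ![ε₀, ε₁] ![q₀, q₁] := by
  decide +kernel

set_option maxRecDepth 100000 in
theorem isElliptic_prod_strands_pair : ∀ (ε₀ ε₁ : Bool) (p₀ p₁ : Axis),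
    ¬Coaxial (strands ![ε₀, ε₁] ![p₀, p₁]) →
    IsElliptic ((strands ![ε₀, ε₁] ![p₀, p₁]).map spin).prod := by
  decide +kernel

/-- Braids on three strands, found by search, that bring the first strand back to the front on every
axis admitted in `exists_frontsBy_strands_triple`. -/
def threeBraids : List (List ℕ) :=
  [[], [1, 1, 1, 0, 0], [0, 0, 1, 0, 0], [0, 0, 1, 1, 0, 0], [1, 0, 0, 0, 0, 1, 0, 0],
    [0, 0, 0, 0, 1, 0, 0, 0, 0]]

set_option maxRecDepth 100000 in
theorem exists_frontsBy_strands_triple : ∀ (ε₀ ε₁ ε₂ : Bool) (p₀ p₁ p₂ p : Axis),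
    ¬Coaxial (strands ![ε₀, ε₁, ε₂] ![p₀, p₁, p₂]) →
    IsElliptic ((spin (⟨0, ε₀, p⟩ : Letter (Fin 3)))⁻¹ *
      ((strands ![ε₀, ε₁, ε₂] ![p₀, p₁, p₂]).map spin).prod) →
    ∃ β ∈ threeBraids, FrontsBy β (strands ![ε₀, ε₁, ε₂] ![p₀, p₁, p₂]) ⟨0, ε₀, p⟩ := by
  decide +kernel

/-- The analogue of `threeBraids` for four strands and
`exists_forall_ne_frontsBy_strands_quadruple`. -/
def fourBraids : List (List ℕ) :=
  [[], [0, 0], [2, 1, 0, 0], [0, 0, 1, 0, 0], [1, 0, 0, 0, 0], [2, 1, 1, 0, 0],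
    [0, 0, 1, 1, 0, 0], [0, 0, 2, 1, 0, 0], [0, 0, 0, 0, 1, 0, 0]]

set_option maxRecDepth 100000 in
theorem exists_forall_ne_frontsBy_strands_quadruple : ∀ (ε₀ ε₁ ε₂ ε₃ : Bool) (p₁ p₂ p₃ : Axis),
    ¬Coaxial (strands ![ε₀, ε₁, ε₂, ε₃] ![0, p₁, p₂, p₃]) →
    ∃ q, ∀ p ≠ q, ∃ β ∈ fourBraids,
      FrontsBy β (strands ![ε₀, ε₁, ε₂, ε₃] ![0, p₁, p₂, p₃]) ⟨0, ε₀, p⟩ := by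
  decide +kernel

end FiniteComputations

theorem prod_map_spin_map (f : Λ → Λ') (w : List (Letter Λ)) :
    ((w.map (Letter.map f 0)).map spin).prod = (w.map spin).prod := by
  have spin_map (x : Letter Λ) : spin (Letter.map f 0 x) = spin x := by
    rw [Letter.map_apply, add_zero]
    rfl
  simp only [List.map_map, Function.comp_def, spin_map]

theorem pair_eq_map_strands (x y : Letter Λ) :
    [x, y] = (strands ![x.sign, y.sign] ![x.axis, y.axis]).map
      (Letter.map ![x.label, y.label] 0) := by
  simp [strands, Letter.map_apply]

theorem hurwitzEquiv_pair {x y : Letter Λ} {p q : Axis} (h : ¬Coaxial [x, y])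
    (h' : ¬Coaxial [x.withAxis p, y.withAxis q])
    (hspin : ([x, y].map spin).prod = ([x.withAxis p, y.withAxis q].map spin).prod) :
    HurwitzEquiv [x, y] [x.withAxis p, y.withAxis q] := by
  have hw := pair_eq_map_strands x y
  have hw' := pair_eq_map_strands (x.withAxis p) (y.withAxis q)
  rw [hw, coaxial_map_iff] at h
  rw [hw', coaxial_map_iff] at h'
  rw [hw, hw', prod_map_spin_map, prod_map_spin_map] at hspin
  obtain ⟨β, -, hβ⟩ := exists_hurwitzMoves_strands_pair_eq _ _ _ _ _ _ h h' hspin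
  have hmoves := HurwitzEquiv.of_moves β (strands ![x.sign, y.sign] ![x.axis, y.axis])
  rw [hβ] at hmoves
  rw [hw, hw']
  exact hmoves.map _

theorem isElliptic_prod_pair {x y : Letter Λ} (h : ¬Coaxial [x, y]) :
    IsElliptic ([x, y].map spin).prod := by
  rw [pair_eq_map_strands, coaxial_map_iff] at h
  rw [pair_eq_map_strands, prod_map_spin_map]
  exact isElliptic_prod_strands_pair _ _ _ _ h

theorem fronts_triple {x y z : Letter Λ} {p : Axis} (h : ¬Coaxial [x, y, z])
    (hp : IsElliptic ((spin (x.withAxis p))⁻¹ * ([x, y, z].map spin).prod)) :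
    Fronts [x, y, z] (x.withAxis p) := by
  have hw : [x, y, z] = (strands ![x.sign, y.sign, z.sign] ![x.axis, y.axis, z.axis]).map
      (Letter.map ![x.label, y.label, z.label] 0) := by simp [strands, Letter.map_apply]
  rw [hw, coaxial_map_iff] at h
  rw [hw, prod_map_spin_map] at hp
  obtain ⟨β, -, hβ⟩ := exists_frontsBy_strands_triple _ _ _ _ _ _ _ h hp
  rw [hw]
  simpa [Letter.map_apply, Letter.withAxis] using hβ.fronts.map ![x.label, y.label, z.label] 0

theorem exists_forall_ne_fronts_quadruple {x₀ x₁ x₂ x₃ : Letter Λ}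
    (h : ¬Coaxial [x₀, x₁, x₂, x₃]) :
    ∃ q, ∀ p ≠ q, Fronts [x₀, x₁, x₂, x₃] (x₀.withAxis p) := by
  have hw : [x₀, x₁, x₂, x₃] = (strands ![x₀.sign, x₁.sign, x₂.sign, x₃.sign]
        ![0, x₁.axis - x₀.axis, x₂.axis - x₀.axis, x₃.axis - x₀.axis]).map
      (Letter.map ![x₀.label, x₁.label, x₂.label, x₃.label] x₀.axis) := by
    simp [strands, Letter.map_apply]
  rw [hw, coaxial_map_iff] at h
  obtain ⟨q, hq⟩ := exists_forall_ne_frontsBy_strands_quadruple _ _ _ _ _ _ _ h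
  refine ⟨q + x₀.axis, fun p hp => ?_⟩
  obtain ⟨β, -, hβ⟩ := hq (p - x₀.axis) (by rwa [Ne, sub_eq_iff_eq_add])
  rw [hw]
  have hfront := hβ.fronts.map ![x₀.label, x₁.label, x₂.label, x₃.label] x₀.axis
  rwa [Letter.map_apply, sub_add_cancel] at hfront

section Fronts

variable {x y : Letter Λ} {u v w w' : List (Letter Λ)}

/-- The square of a Hurwitz move, which keeps the classes of both letters in place. -/
theorem HurwitzEquiv.twist (x y : Letter Λ) (w : List (Letter Λ)) :
    HurwitzEquiv (x :: y :: w) ((y ◃⁻¹ x) :: ((y ◃⁻¹ x) ◃⁻¹ y) :: w) :=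
  (swap x y w).trans (swap y (y ◃⁻¹ x) w)

theorem exists_fronts_withAxis (h : ¬Coaxial (x :: u)) (hu : 2 ≤ u.length) :
    ∃ p, Fronts (x :: u) (x.withAxis p) := by
  by_cases hcoax : Coaxial u
  · obtain ⟨y, z, v, rfl⟩ : ∃ y z v, u = y :: z :: v := by
      rcases u with _ | ⟨y, _ | ⟨z, v⟩⟩ <;> simp_all
    have hxy : x.axis ≠ y.axis := fun hxy => h (coaxial_cons_cons_iff.2 ⟨hxy, hcoax⟩)
    have hyz : y.axis = z.axis := (coaxial_cons_cons_iff.1 hcoax).1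
    refine ⟨(y ◃⁻¹ x).axis, _, HurwitzEquiv.twist x y (z :: v), fun hv => hxy ?_⟩
    have hfixed := (coaxial_cons_cons_iff.1 hv).1.trans hyz.symm
    rw [Letter.axis_invAct_eq_self_iff] at hfixed
    exact (Letter.axis_invAct_eq_iff y x).1 hfixed.symm
  · exact ⟨x.axis, u, .refl _, hcoax⟩

/-- Twisting with the letters in the class of the second letter moves the first letter through its
class. -/
theorem exists_forall_ne_fronts_cons {q : Axis} (x : Letter Λ)
    (hq : ∀ r ≠ q, Fronts u (y.withAxis r)) :
    ∃ q', ∀ p ≠ q', Fronts (x :: u) (x.withAxis p) := by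
  refine ⟨(y.withAxis q ◃⁻¹ x).axis, fun p hp => ?_⟩
  obtain ⟨r, hr⟩ := x.exists_withAxis_invAct_eq y p
  have hrq : r ≠ q := by
    rintro rfl
    exact hp (congrArg Letter.axis hr).symm
  obtain ⟨v, huv, hv⟩ := hq r hrq
  have htwist := (huv.cons x).trans (HurwitzEquiv.twist x (y.withAxis r) v)
  rw [hr] at htwist
  exact ⟨_, htwist, mt List.Pairwise.of_cons hv⟩

theorem exists_forall_ne_fronts (h : ¬Coaxial (x :: u)) (hu : 3 ≤ u.length) :
    ∃ q, ∀ p ≠ q, Fronts (x :: u) (x.withAxis p) := by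
  obtain ⟨n, hn⟩ := Nat.exists_eq_add_of_le' hu
  induction n generalizing x u with
  | zero =>
    obtain ⟨y₁, y₂, y₃, rfl⟩ := List.length_eq_three.1 (hn.trans (zero_add 3))
    exact exists_forall_ne_fronts_quadruple h
  | succ n ih =>
    obtain ⟨p, u', hequiv, hu'⟩ := exists_fronts_withAxis h (by lia)
    obtain ⟨y, v, rfl⟩ := List.exists_cons_of_length_eq_add_one
      ((by simpa using hequiv.length_eq.symm : u'.length = u.length).trans hn)
    have hlen := hequiv.length_eq
    simp only [List.length_cons] at hlen
    obtain ⟨q, hq⟩ := ih hu' (by lia) (by lia)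
    obtain ⟨q', hq'⟩ := exists_forall_ne_fronts_cons (x.withAxis p) hq
    exact ⟨q', fun r hr => hequiv.fronts (hq' r hr)⟩

theorem prod_map_spin_eq (h : HurwitzEquiv v w) : (v.map spin).prod = (w.map spin).prod :=
  (h.map spin).prod_eq

theorem exists_hurwitzEquiv_cons_withAxis (h : x.cls ∈ w.map Letter.cls) :
    ∃ p u, HurwitzEquiv w (x.withAxis p :: u) := by
  obtain ⟨y, hy, hyx⟩ := List.mem_map.1 h
  rw [Letter.eq_withAxis_of_cls_eq hyx] at hy
  exact ⟨y.axis, HurwitzEquiv.exists_front hy⟩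

theorem Fronts.of_length_eq_three (hw : ¬Coaxial w)
    (hcls : (v.map Letter.cls).Perm (w.map Letter.cls))
    (hspin : (v.map spin).prod = (w.map spin).prod) (hlen : w.length = 3) (hx : Fronts v x) :
    Fronts w x := by
  obtain ⟨u, hvu, hu⟩ := hx
  have hxw : x.cls ∈ w.map Letter.cls :=
    hcls.subset ((hvu.perm_map Letter.cls_invAct).symm.subset (by simp))
  obtain ⟨p, u', hwu⟩ := exists_hurwitzEquiv_cons_withAxis hxw
  rw [prod_map_spin_eq hvu, prod_map_spin_eq hwu] at hspin
  have hlen_u' : u'.length = 2 := Nat.succ.inj (hwu.length_eq.symm.trans hlen)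
  have hlen_u : u.length = 2 := by
    have := hcls.length_eq
    simp only [List.length_map, hvu.length_eq, hlen, List.length_cons] at this
    lia
  obtain ⟨y', z', rfl⟩ := List.length_eq_two.1 hlen_u'
  obtain ⟨y, z, rfl⟩ := List.length_eq_two.1 hlen_u
  refine hwu.fronts (fronts_triple (p := x.axis) (hwu.coaxial_iff.not.1 hw) ?_)
  change IsElliptic ((spin x)⁻¹ * _)
  rw [← hspin, List.map_cons, List.prod_cons, inv_mul_cancel_left]
  exact isElliptic_prod_pair hu

theorem exists_fronts_fronts (hw : ¬Coaxial w) (hw' : ¬Coaxial w')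
    (hcls : (w.map Letter.cls).Perm (w'.map Letter.cls))
    (hspin : (w.map spin).prod = (w'.map spin).prod) (hlen : 3 ≤ w.length) :
    ∃ y, Fronts w y ∧ Fronts w' y := by
  obtain ⟨x, u, rfl⟩ := List.exists_cons_of_length_pos (by lia : 0 < w.length)
  have hlen' : (x :: u).length = w'.length := by simpa using hcls.length_eq
  rcases hlen.eq_or_lt with hlen | hlen
  · obtain ⟨p, hp⟩ := exists_fronts_withAxis hw (Nat.succ.inj hlen).le
    exact ⟨_, hp, hp.of_length_eq_three hw' hcls hspin (by lia)⟩
  · obtain ⟨p, u', hwu⟩ := exists_hurwitzEquiv_cons_withAxis (hcls.subset (by simp) :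
      x.cls ∈ w'.map Letter.cls)
    obtain ⟨q, hq⟩ := exists_forall_ne_fronts hw (Nat.le_of_lt_succ hlen)
    have hlen_u' := hwu.length_eq
    simp only [List.length_cons] at hlen hlen' hlen_u'
    obtain ⟨q', hq'⟩ := exists_forall_ne_fronts (hwu.coaxial_iff.not.1 hw') (by lia)
    have exists_other : ∀ q q' : Axis, ∃ r, r ≠ q ∧ r ≠ q' := by decide
    obtain ⟨r, hr, hr'⟩ := exists_other q q'
    exact ⟨x.withAxis r, hq r hr, hwu.fronts (hq' r hr')⟩

theorem hurwitzEquiv_of_length_eq_two (hw : ¬Coaxial w) (hw' : ¬Coaxial w')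
    (hcls : (w.map Letter.cls).Perm (w'.map Letter.cls))
    (hspin : (w.map spin).prod = (w'.map spin).prod) (hlen : w.length = 2) :
    HurwitzEquiv w w' := by
  obtain ⟨x, y, rfl⟩ := List.length_eq_two.1 hlen
  obtain ⟨p, u, hwu⟩ := exists_hurwitzEquiv_cons_withAxis (hcls.subset (by simp) :
      x.cls ∈ w'.map Letter.cls)
  have hcls_u := hcls.trans (hwu.perm_map Letter.cls_invAct)
  obtain ⟨y', rfl, hy⟩ : ∃ y', u = [y'] ∧ y'.cls = y.cls := by
    simpa [Letter.withAxis, Letter.cls] using hcls_u.symm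
  refine HurwitzEquiv.trans ?_ hwu.symm
  rw [hwu.coaxial_iff, Letter.eq_withAxis_of_cls_eq hy] at hw'
  rw [prod_map_spin_eq hwu, Letter.eq_withAxis_of_cls_eq hy] at hspin
  rw [Letter.eq_withAxis_of_cls_eq hy]
  exact hurwitzEquiv_pair hw hw' hspin

theorem two_le_length_of_not_coaxial (hw : ¬Coaxial w) : 2 ≤ w.length := by
  rcases w with _ | ⟨x, _ | ⟨y, w⟩⟩ <;> simp_all [Coaxial]

theorem hurwitzEquiv_of_not_coaxial (hw : ¬Coaxial w) (hw' : ¬Coaxial w')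
    (hcls : (w.map Letter.cls).Perm (w'.map Letter.cls))
    (hspin : (w.map spin).prod = (w'.map spin).prod) : HurwitzEquiv w w' := by
  induction hn : w.length generalizing w w' with
  | zero =>
    have := two_le_length_of_not_coaxial hw
    lia
  | succ n ih =>
    rcases (two_le_length_of_not_coaxial hw).eq_or_lt with hlen | hlen
    · exact hurwitzEquiv_of_length_eq_two hw hw' hcls hspin hlen.symm
    · obtain ⟨y, ⟨v, hwv, hv⟩, v', hwv', hv'⟩ := exists_fronts_fronts hw hw' hcls hspin hlen
      rw [prod_map_spin_eq hwv, prod_map_spin_eq hwv'] at hspin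
      have hcls_cons := ((hwv.perm_map Letter.cls_invAct).symm.trans hcls).trans
        (hwv'.perm_map Letter.cls_invAct)
      have hvv' : HurwitzEquiv v v' :=
        ih hv hv' (List.Perm.cons_inv hcls_cons) (mul_left_cancel hspin)
          (Nat.succ.inj (hwv.length_eq.symm.trans hn))
      exact (hwv.trans (hvv'.cons y)).trans hwv'.symm

end Fronts

section ReflectionsOfG5

variable {Q G : Type*} [Rack Q] [Group G]

theorem mem_range_of_isConj (f : Q →◃ Quandle.Conj G) (hf : Subgroup.closure (Set.range f) = ⊤)
    {g h : G} (hg : g ∈ Set.range f) (hgh : IsConj g h) : h ∈ Set.range f := by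
  have closure_le : Subgroup.closure (Set.range f) ≤ Subgroup.normalizer (Set.range f : Set G) := by
    rw [Subgroup.closure_le]
    rintro _ ⟨x, rfl⟩
    refine Subgroup.mem_set_normalizer_iff.2 fun n => ⟨?_, ?_⟩
    · rintro ⟨y, rfl⟩
      exact ⟨x ◃ y, f.map_act⟩
    · rintro ⟨y, hy⟩
      refine ⟨x ◃⁻¹ y, ?_⟩
      rw [shelfHom_map_invAct, conj_invAct_eq, hy]
      group
  obtain ⟨c, rfl⟩ := isConj_iff.1 hgh
  have hc : c ∈ Subgroup.normalizer (Set.range f : Set G) := closure_le (hf ▸ Subgroup.mem_top c)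
  exact (Subgroup.mem_set_normalizer_iff.1 hc g).1 hg

theorem prod_pow_eq_one_of_commute {l : List G} {n : ℕ} (hcomm : ∀ x ∈ l, ∀ y ∈ l, Commute x y)
    (hpow : ∀ x ∈ l, x ^ n = 1) : l.prod ^ n = 1 := by
  induction l with
  | nil => simp
  | cons x l ih =>
    simp only [List.forall_mem_cons] at hcomm hpow
    rw [List.prod_cons, (Commute.list_prod_right l x hcomm.1.2).mul_pow, hpow.1,
      ih (fun y hy => (hcomm.2 y hy).2) hpow.2, one_mul]

/-- The homomorphism from G₅ given by a pair of elements satisfying the defining relations. -/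
def g5Lift (x y : G) (hx : x ^ 3 = 1) (hy : y ^ 3 = 1) (hxy : x * y * x * y = y * x * y * x) :
    G5 →* G :=
  PresentedGroup.toGroup (rels := g5Rels) (f := ![x, y]) <| by
    rintro r (rfl | rfl | rfl)
    · simpa using hx
    · simpa using hy
    · rw [map_mul, map_inv, mul_inv_eq_one]
      simpa using hxy

theorem g5Lift_ga {x y : G} {hx : x ^ 3 = 1} {hy : y ^ 3 = 1}
    {hxy : x * y * x * y = y * x * y * x} : g5Lift x y hx hy hxy ga = x :=
  PresentedGroup.toGroup.of _

theorem g5Lift_gb {x y : G} {hx : x ^ 3 = 1} {hy : y ^ 3 = 1}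
    {hxy : x * y * x * y = y * x * y * x} : g5Lift x y hx hy hxy gb = y :=
  PresentedGroup.toGroup.of _

theorem ga_pow_three : ga ^ 3 = 1 :=
  PresentedGroup.one_of_mem (rels := g5Rels) (Or.inl rfl)

theorem gb_pow_three : gb ^ 3 = 1 :=
  PresentedGroup.one_of_mem (rels := g5Rels) (Or.inr (Or.inl rfl))

theorem ga_mul_gb_mul_ga_mul_gb : ga * gb * ga * gb = gb * ga * gb * ga :=
  mul_inv_eq_one.1 (PresentedGroup.one_of_mem (rels := g5Rels) (Or.inr (Or.inr rfl)))

theorem eq_top_of_ga_mem_of_gb_mem {H : Subgroup G5} (ha : ga ∈ H) (hb : gb ∈ H) : H = ⊤ :=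
  eq_top_iff.2 fun g _ => PresentedGroup.generated_by g5Rels H (Fin.forall_fin_two.2 ⟨ha, hb⟩) g

/-- The central element `(ab)²` of G₅. -/
def gz : G5 := ga * gb * ga * gb

theorem gz_mem_center : gz ∈ Subgroup.center G5 := by
  have ga_comm : ga * gz = gz * ga := by
    conv_lhs => rw [gz, ga_mul_gb_mul_ga_mul_gb]
    simp only [gz, mul_assoc]
  have gb_comm : gb * gz = gz * gb := by
    conv_rhs => rw [gz, ga_mul_gb_mul_ga_mul_gb]
    simp only [gz, mul_assoc]
  have centralizer_eq : Subgroup.centralizer {gz} = ⊤ := eq_top_of_ga_mem_of_gb_mem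
    (Subgroup.mem_centralizer_singleton_iff.2 ga_comm)
    (Subgroup.mem_centralizer_singleton_iff.2 gb_comm)
  rwa [Subgroup.centralizer_eq_top_iff_subset, Set.singleton_subset_iff] at centralizer_eq

theorem gb_inv_mul_gz : gb⁻¹ * gz = ga * gb * ga := by
  rw [gz, ga_mul_gb_mul_ga_mul_gb]
  group

/-- A braid partner of `a` in G₅: the element `b⁻¹` up to a central factor. -/
def braidPartner : G5 := gb⁻¹ * gz ^ 2

theorem ga_mul_braidPartner_mul_ga : ga * braidPartner * ga = braidPartner * ga * braidPartner := by
  have gz_comm (g : G5) : gz * g = g * gz := (Subgroup.mem_center_iff.1 gz_mem_center g).symm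
  have gz_sq_comm (g : G5) : gz ^ 2 * g = g * gz ^ 2 :=
    (Subgroup.mem_center_iff.1 (pow_mem gz_mem_center 2) g).symm
  have inv_ga_inv : gb⁻¹ * ga * gb⁻¹ * gz ^ 2 = ga * gb⁻¹ * ga :=
    calc gb⁻¹ * ga * gb⁻¹ * gz ^ 2 = gb⁻¹ * gz * ga * (gb⁻¹ * gz) := by
          rw [pow_two, mul_assoc gb⁻¹ gz ga, gz_comm ga]
          simp only [mul_assoc]
          rw [← mul_assoc gz gb⁻¹ gz, gz_comm gb⁻¹, mul_assoc]
      _ = ga * gb * ga ^ 3 * gb * ga := by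
          rw [gb_inv_mul_gz, pow_three]
          simp only [mul_assoc]
      _ = ga * (gb * gb) * ga := by
          rw [ga_pow_three, mul_one]
          simp only [mul_assoc]
      _ = ga * gb⁻¹ * ga := by
          rw [eq_inv_of_mul_eq_one_left ((pow_three' gb).symm.trans gb_pow_three)]
  calc ga * braidPartner * ga = ga * gb⁻¹ * ga * gz ^ 2 := by
        simp only [braidPartner, mul_assoc, gz_sq_comm ga]
    _ = gb⁻¹ * ga * gb⁻¹ * gz ^ 2 * gz ^ 2 := by rw [inv_ga_inv]
    _ = braidPartner * ga * braidPartner := by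
      rw [braidPartner, mul_assoc gb⁻¹ (gz ^ 2) ga, gz_sq_comm ga]
      simp only [mul_assoc]
      rw [← mul_assoc (gz ^ 2) gb⁻¹, gz_sq_comm gb⁻¹, mul_assoc]

/-- The central factor of the letters with a given label. The label `false` stands for the
conjugates of `a` and `a²`, the label `true` for those of `b` and `b²`. -/
def centralFactor (l : Bool) : G5 := bif l then (gz ^ 2)⁻¹ else 1

theorem centralFactor_mem_center (l : Bool) : centralFactor l ∈ Subgroup.center G5 := by
  cases l
  exacts [one_mem _, inv_mem (pow_mem gz_mem_center 2)]

/-- The reflection of G₅ denoted by a letter. -/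
def g5Reflection : Letter Bool →◃ Quandle.Conj G5 :=
  letterHom ga_mul_braidPartner_mul_ga ga_pow_three centralFactor_mem_center

theorem g5Reflection_ga : g5Reflection ⟨false, true, 0⟩ = ga := mul_one ga

theorem g5Reflection_ga_sq : g5Reflection ⟨false, false, 0⟩ = ga ^ 2 := by
  change (ga * 1)⁻¹ = ga ^ 2
  rw [mul_one, inv_eq_iff_mul_eq_one, ← pow_succ', ga_pow_three]

theorem g5Reflection_gb_inv : g5Reflection ⟨true, true, (1, 0)⟩ = gb⁻¹ :=
  mul_inv_cancel_right gb⁻¹ (gz ^ 2)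

theorem g5Reflection_gb : g5Reflection ⟨true, false, (1, 0)⟩ = gb := by
  change (g5Reflection ⟨true, true, (1, 0)⟩ : G5)⁻¹ = gb
  rw [g5Reflection_gb_inv, inv_inv]

theorem gb_inv_eq_sq : gb⁻¹ = gb ^ 2 := by
  rw [inv_eq_iff_mul_eq_one, ← pow_succ', gb_pow_three]

theorem closure_range_g5Reflection : Subgroup.closure (Set.range g5Reflection : Set G5) = ⊤ :=
  eq_top_of_ga_mem_of_gb_mem (Subgroup.subset_closure ⟨_, g5Reflection_ga⟩)
    (Subgroup.subset_closure ⟨_, g5Reflection_gb⟩)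

theorem exists_g5Reflection_eq {r : G5} (hr : IsReflection5 r) : ∃ x, g5Reflection x = r := by
  have of_isConj {g : G5} (x : Letter Bool) (hx : g5Reflection x = g) (hg : IsConj g r) :
      ∃ x, g5Reflection x = r :=
    mem_range_of_isConj g5Reflection closure_range_g5Reflection ⟨x, hx⟩ hg
  rcases hr with h | h | h | h
  exacts [of_isConj _ g5Reflection_ga h, of_isConj _ g5Reflection_gb h,
    of_isConj _ g5Reflection_ga_sq h, of_isConj _ (g5Reflection_gb_inv.trans gb_inv_eq_sq) h]

theorem IsReflection5.pow_three {r : G5} (hr : IsReflection5 r) : r ^ 3 = 1 := by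
  have of_isConj {g : G5} (hg : g ^ 3 = 1) (hgr : IsConj g r) : r ^ 3 = 1 :=
    isConj_one_right.1 (hg ▸ hgr.pow 3)
  have sq_pow {g : G5} (hg : g ^ 3 = 1) : (g ^ 2) ^ 3 = 1 := by
    rw [← pow_mul, mul_comm, pow_mul, hg, one_pow]
  rcases hr with h | h | h | h
  exacts [of_isConj ga_pow_three h, of_isConj gb_pow_three h, of_isConj (sq_pow ga_pow_three) h,
    of_isConj (sq_pow gb_pow_three) h]

/-- The abelianization of G₅. -/
def g5Abelianization : G5 →* Multiplicative (ZMod 3 × ZMod 3) :=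
  g5Lift (.ofAdd (1, 0)) (.ofAdd (0, 1)) (by decide) (by decide) (by decide)

/-- The image of a letter in the abelianization of G₅. -/
def letterAbelianization : Letter Bool → Multiplicative (ZMod 3 × ZMod 3) :=
  letterElement (.ofAdd (1, 0)) (.ofAdd (1, 0)) fun l => bif l then .ofAdd (2, 2) else 1

theorem g5Abelianization_g5Reflection (x : Letter Bool) :
    g5Abelianization (g5Reflection x) = letterAbelianization x := by
  have map_gz : g5Abelianization gz = .ofAdd (2, 2) := by
    simp only [gz, map_mul, g5Abelianization, g5Lift_ga, g5Lift_gb]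
    decide
  have map_braidPartner : g5Abelianization braidPartner = .ofAdd (1, 0) := by
    rw [braidPartner, map_mul, map_pow, map_gz, map_inv, g5Abelianization, g5Lift_gb]
    decide
  have map_centralFactor : g5Abelianization ∘ centralFactor =
      fun l => bif l then .ofAdd (2, 2) else 1 := by
    funext l
    cases l
    · exact map_one _
    · change g5Abelianization (gz ^ 2)⁻¹ = _
      rw [map_inv, map_pow, map_gz]
      decide
  change g5Abelianization (letterElement ga braidPartner centralFactor x) = _
  rw [map_letterElement, map_braidPartner, map_centralFactor, g5Abelianization, g5Lift_ga]
  rfl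

theorem cls_eq_of_isConj {x y : Letter Bool} (h : IsConj (g5Reflection x : G5) (g5Reflection y)) :
    x.cls = y.cls := by
  have h := isConj_iff_eq.1 (g5Abelianization.map_isConj h)
  rw [g5Abelianization_g5Reflection, g5Abelianization_g5Reflection] at h
  have separates : ∀ (l l' s s' : Bool) (p q : Axis),
      letterAbelianization ⟨l, s, p⟩ = letterAbelianization ⟨l', s', q⟩ → (l, s) = (l', s') := by
    decide +kernel
  exact separates _ _ _ _ _ _ h

/-- The action of G₅ on the plane over `𝔽₃`, through its quotient `SL₂(𝔽₃)`. -/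
def planeAction : G5 →* Equiv.Perm Plane :=
  g5Lift shear shear'⁻¹ (by decide) (by decide) (by decide)

theorem planeAction_g5Reflection (x : Letter Bool) : planeAction (g5Reflection x) = spin x := by
  have map_gz_sq : planeAction (gz ^ 2) = 1 := by
    simp only [gz, map_pow, map_mul, planeAction, g5Lift_ga, g5Lift_gb]
    decide
  have map_braidPartner : planeAction braidPartner = shear' := by
    rw [braidPartner, map_mul, map_gz_sq, mul_one, map_inv, planeAction, g5Lift_gb, inv_inv]
  have map_centralFactor : planeAction ∘ centralFactor = 1 := by
    funext l
    cases l
    · exact map_one _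
    · change planeAction (gz ^ 2)⁻¹ = 1
      rw [map_inv, map_gz_sq, inv_one]
  change planeAction (letterElement ga braidPartner centralFactor x) =
    letterElement shear shear' 1 x
  rw [map_letterElement, map_braidPartner, map_centralFactor, planeAction, g5Lift_ga]

theorem prod_map_spin_eq_planeAction (w : List (Letter Bool)) :
    (w.map spin).prod = planeAction (w.map g5Reflection).prod := by
  simp only [map_list_prod, List.map_map, Function.comp_def, planeAction_g5Reflection]

end ReflectionsOfG5

section FactorizationsOfG5

variable {k : ℕ} {t t' : Fin k → G5}

theorem exists_not_commute (ht : ∀ i, IsReflection5 (t i)) (h : (List.ofFn t).prod ^ 3 ≠ 1) :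
    ∃ i j, ¬Commute (t i) (t j) := by
  contrapose! h
  refine prod_pow_eq_one_of_commute ?_ ?_ <;> simp only [List.forall_mem_ofFn_iff]
  exacts [h, fun i => (ht i).pow_three]

theorem not_coaxial_ofFn {x : Fin k → Letter Bool}
    (h : ∃ i j, ¬Commute (g5Reflection (x i) : G5) (g5Reflection (x j))) :
    ¬Coaxial (List.ofFn x) := by
  obtain ⟨i, j, hij⟩ := h
  intro hcoax
  obtain ⟨p, hp⟩ := coaxial_iff_exists.1 hcoax
  rw [List.forall_mem_ofFn_iff] at hp
  exact hij (commute_of_axis_eq g5Reflection ((hp i).trans (hp j).symm))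

theorem perm_map_cls_ofFn {x x' : Fin k → Letter Bool} {σ : Equiv.Perm (Fin k)}
    (h : ∀ i, (x i).cls = (x' (σ i)).cls) :
    ((List.ofFn x).map Letter.cls).Perm ((List.ofFn x').map Letter.cls) := by
  have hcomp : Letter.cls ∘ x = (Letter.cls ∘ x') ∘ σ := funext h
  rw [List.map_ofFn, List.map_ofFn, hcomp]
  exact σ.ofFn_comp_perm _

theorem sameHurwitzOrbit_of_isConj (ht : ∀ i, IsReflection5 (t i))
    (ht' : ∀ i, IsReflection5 (t' i)) (hcomm : ∃ i j, ¬Commute (t i) (t j))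
    (hcomm' : ∃ i j, ¬Commute (t' i) (t' j)) (hprod : (List.ofFn t).prod = (List.ofFn t').prod)
    {σ : Equiv.Perm (Fin k)} (hσ : ∀ i, IsConj (t i) (t' (σ i))) : SameHurwitzOrbit t t' := by
  choose x hx using fun i => exists_g5Reflection_eq (ht i)
  choose x' hx' using fun i => exists_g5Reflection_eq (ht' i)
  obtain rfl : g5Reflection ∘ x = t := funext hx
  obtain rfl : g5Reflection ∘ x' = t' := funext hx'
  have hspin : ((List.ofFn x).map spin).prod = ((List.ofFn x').map spin).prod := by
    rw [prod_map_spin_eq_planeAction, prod_map_spin_eq_planeAction, List.map_ofFn, List.map_ofFn,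
      hprod]
  have hcls := perm_map_cls_ofFn fun i => cls_eq_of_isConj (hσ i)
  have hequiv := hurwitzEquiv_of_not_coaxial (not_coaxial_ofFn hcomm) (not_coaxial_ofFn hcomm')
    hcls hspin
  have hequiv := hequiv.map g5Reflection
  rw [List.map_ofFn, List.map_ofFn] at hequiv
  exact sameHurwitzOrbit_of_hurwitzEquiv hequiv

end FactorizationsOfG5

theorem g5_hurwitz_transitive_up_to_classes_general {k : ℕ} {t t' : Fin k → G5}
    (ht : ∀ i, IsReflection5 (t i)) (ht' : ∀ i, IsReflection5 (t' i))
    (hcomm : ∃ i j, ¬Commute (t i) (t j)) (hcomm' : ∃ i j, ¬Commute (t' i) (t' j))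
    (hprod : (List.ofFn t).prod = (List.ofFn t').prod) :
    SameHurwitzOrbit t t' ↔ ∃ σ : Equiv.Perm (Fin k), ∀ i, IsConj (t i) (t' (σ i)) :=
  ⟨exists_perm_isConj_of_sameHurwitzOrbit,
    fun ⟨_, hσ⟩ => sameHurwitzOrbit_of_isConj ht ht' hcomm hcomm' hprod hσ⟩

theorem g5_hurwitz_transitive_up_to_classes
    (c : G5) (hc : IsCoxeter5 c) (k : ℕ) (hk : 2 ≤ k)
    (t t' : Fin k → G5)
    (ht : ∀ i, IsReflection5 (t i)) (ht' : ∀ i, IsReflection5 (t' i))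
    (hp : (List.ofFn t).prod = c) (hp' : (List.ofFn t').prod = c) :
    SameHurwitzOrbit t t' ↔
      ∃ σ : Equiv.Perm (Fin k), ∀ i, IsConj (t i) (t' (σ i)) := by
  have hc_pow : c ^ 3 ≠ 1 := pow_ne_one_of_lt_orderOf three_ne_zero (by rw [hc]; norm_num)
  exact g5_hurwitz_transitive_up_to_classes_general ht ht' (exists_not_commute ht (hp ▸ hc_pow))
    (exists_not_commute ht' (hp' ▸ hc_pow)) (hp.trans hp'.symm)
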